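/- Let d ≥ 1 be a natural number and let Δ be a real number with 0 < Δ < d/2. Then the function (x,y) ↦ (1+‖x‖²)^{Δ−d}·(1+‖y‖²)^{Δ−d}·‖x−y‖^{−2Δ} is Lebesgue integrable on ℝ^d × ℝ^d and ∫_{ℝ^d}∫_{ℝ^d} (1+‖x‖²)^{Δ−d}(1+‖y‖²)^{Δ−d}‖x−y‖^{−2Δ} dx dy = 2^{1−d}·π^{d+1/2}·Γ(d/2 − Δ)/(Γ((d+1)/2)·Γ(d − Δ)). (This is the double sphere integral of a two-point function of dimension Δ in stereographic coordinates; for Δ = d − ε it gives the dimensionally regularized melon vacuum integral, which vanishes as ε → 0 for d not even.) -/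

import Mathlib

open Real MeasureTheory

/-!
Writing each factor `(1 + ‖x‖²) ^ (-a)` as `Γ(a)⁻¹ ∫ s ^ (a - 1) exp (-s (1 + ‖x‖²)) ds` makes the
integral over `x` and `y` Gaussian apart from `‖x - y‖ ^ r`. Completing the square in `y` at fixed
`z = x - y` leaves a radial moment in `z`, and hence a multiple of
`(s t) ^ (-(n + r) / 2) (s + t) ^ (r / 2)`, where `n` is the dimension. The remaining integral over
`s` and `t` pairs the convolution of two power densities, which is a Beta function times a power
density, with `exp (-w) w ^ (r / 2)`, and so is elementary. The duplication formula brings the case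
`r = -2Δ`, `a = n - Δ` to its final shape. All integrands are nonnegative, so the computation takes
place in `ℝ≥0∞`, where Tonelli's theorem gives integrability along with the value.
-/

open Module (finrank)
open ProbabilityTheory (beta)
open scoped ENNReal

lemma lintegral_ofReal_eq_of_integral_eq {X : Type*} [MeasurableSpace X] {μ : Measure X}
    {f : X → ℝ} {c : ℝ} (f_nonneg : 0 ≤ᵐ[μ] f) (hc : c ≠ 0) (h : ∫ x, f x ∂μ = c) :
    ∫⁻ x, .ofReal (f x) ∂μ = .ofReal c := by
  rw [← h, ofReal_integral_eq_lintegral_ofReal (.of_integral_ne_zero (h ▸ hc)) f_nonneg]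

lemma integrable_and_integral_eq_of_lintegral_ofReal {X : Type*} [MeasurableSpace X]
    {μ : Measure X} {f : X → ℝ} {c : ℝ} (hf : AEStronglyMeasurable f μ) (f_nonneg : 0 ≤ᵐ[μ] f)
    (hc : 0 ≤ c) (h : ∫⁻ x, .ofReal (f x) ∂μ = .ofReal c) :
    Integrable f μ ∧ ∫ x, f x ∂μ = c := by
  refine ⟨⟨hf, (hasFiniteIntegral_iff_ofReal f_nonneg).2 (h ▸ ENNReal.ofReal_lt_top)⟩, ?_⟩
  rw [integral_eq_lintegral_of_nonneg_ae f_nonneg hf, h, ENNReal.toReal_ofReal hc]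

lemma Gamma_half_div_Gamma {x : ℝ} (hx : 0 < x) :
    Gamma (x / 2) / Gamma x = 2 ^ (1 - x) * √π / Gamma ((x + 1) / 2) := by
  have duplication := Gamma_mul_Gamma_add_half (x / 2)
  rw [← add_div, mul_div_cancel₀ x two_ne_zero] at duplication
  have gamma_pos := Gamma_pos_of_pos hx
  have gamma_half_pos : 0 < Gamma ((x + 1) / 2) := Gamma_pos_of_pos (by positivity)
  rw [div_eq_div_iff gamma_pos.ne' gamma_half_pos.ne', duplication]
  ring

/-- The measure `t ^ (a - 1) dt` on `(0, ∞)`, against which Mellin transforms are taken. -/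
noncomputable def mellinMeasure (a : ℝ) : Measure ℝ :=
  (volume.restrict (Set.Ioi 0)).withDensity fun t ↦ .ofReal (t ^ (a - 1))

namespace mellinMeasure

instance (a : ℝ) : SFinite (mellinMeasure a) := by
  unfold mellinMeasure; infer_instance

lemma lintegral_eq (a : ℝ) (f : ℝ → ℝ≥0∞) :
    ∫⁻ t, f t ∂mellinMeasure a = ∫⁻ t in Set.Ioi 0, .ofReal (t ^ (a - 1)) * f t :=
  lintegral_withDensity_eq_lintegral_mul_non_measurable _ (by fun_prop)
    (.of_forall fun _ ↦ ENNReal.ofReal_lt_top) f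

lemma lintegral_congr {a : ℝ} {f g : ℝ → ℝ≥0∞} (hfg : ∀ t, 0 < t → f t = g t) :
    ∫⁻ t, f t ∂mellinMeasure a = ∫⁻ t, g t ∂mellinMeasure a := by
  simp only [lintegral_eq]
  exact setLIntegral_congr_fun measurableSet_Ioi fun t ht ↦ by rw [hfg t ht]

lemma lintegral_rpow_mul (a b : ℝ) (f : ℝ → ℝ≥0∞) :
    ∫⁻ t, .ofReal (t ^ b) * f t ∂mellinMeasure a = ∫⁻ t, f t ∂mellinMeasure (a + b) := by
  simp only [lintegral_eq]
  refine setLIntegral_congr_fun measurableSet_Ioi fun t (ht : 0 < t) ↦ ?_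
  rw [← mul_assoc, ← ENNReal.ofReal_mul (by positivity), ← rpow_add ht, sub_add_eq_add_sub]

lemma lintegral_comp_mul_left (a : ℝ) {c : ℝ} (hc : 0 < c) (f : ℝ → ℝ≥0∞) :
    ∫⁻ t, f (c * t) ∂mellinMeasure a = .ofReal (c ^ (-a)) * ∫⁻ t, f t ∂mellinMeasure a := by
  have change_of_variables :
      ∫⁻ t in Set.Ioi 0, .ofReal (t ^ (a - 1)) * f t =
        ∫⁻ t in Set.Ioi 0, .ofReal |c * 1| * (.ofReal ((c * t) ^ (a - 1)) * f (c * t)) := by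
    rw [← lintegral_image_eq_lintegral_abs_deriv_mul measurableSet_Ioi
      (fun t _ ↦ ((hasDerivAt_id' t).const_mul c).hasDerivWithinAt)
      (mul_right_injective₀ hc.ne').injOn fun t ↦ .ofReal (t ^ (a - 1)) * f t,
      Set.image_mul_left_Ioi hc, mul_zero]
  rw [lintegral_eq, lintegral_eq, change_of_variables,
    ← lintegral_const_mul' _ _ ENNReal.ofReal_ne_top]
  refine setLIntegral_congr_fun measurableSet_Ioi fun t (ht : 0 < t) ↦ ?_
  have weight : t ^ (a - 1) = c ^ (-a) * (|c * 1| * (c * t) ^ (a - 1)) := by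
    rw [mul_one, abs_of_pos hc, mul_rpow hc.le ht.le, rpow_neg hc.le, rpow_sub_one hc.ne']
    field_simp
  rw [weight, ENNReal.ofReal_mul (by positivity), ENNReal.ofReal_mul (by positivity)]
  ring

lemma lintegral_exp_neg {a : ℝ} (ha : 0 < a) :
    ∫⁻ t, .ofReal (exp (-t)) ∂mellinMeasure a = .ofReal (Gamma a) := by
  rw [lintegral_eq, Gamma_eq_integral ha, ofReal_integral_eq_lintegral_ofReal
    (GammaIntegral_convergent ha)]
  · exact setLIntegral_congr_fun measurableSet_Ioi fun t (ht : 0 < t) ↦ by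
      rw [← ENNReal.ofReal_mul (by positivity), mul_comm]
  · filter_upwards [ae_restrict_mem measurableSet_Ioi] with t (ht : 0 < t)
    simp only [Pi.zero_apply]
    positivity

lemma lintegral_exp_neg_mul {a c : ℝ} (ha : 0 < a) (hc : 0 < c) :
    ∫⁻ t, .ofReal (exp (-(c * t))) ∂mellinMeasure a = .ofReal (c ^ (-a) * Gamma a) := by
  rw [lintegral_comp_mul_left a hc fun t ↦ .ofReal (exp (-t)), lintegral_exp_neg ha,
    ENNReal.ofReal_mul (by positivity)]

/- Substituting `t = s * v` separates the variables. -/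
lemma lintegral_lintegral_comp_add_eq_lintegral_mul (p q : ℝ) {f : ℝ → ℝ≥0∞} (hf : Measurable f) :
    ∫⁻ s, ∫⁻ t, f (s + t) ∂mellinMeasure q ∂mellinMeasure p =
      (∫⁻ v, .ofReal ((1 + v) ^ (-(p + q))) ∂mellinMeasure q) *
        ∫⁻ w, f w ∂mellinMeasure (p + q) :=
  calc
    _ = ∫⁻ s, .ofReal (s ^ q) * ∫⁻ v, f ((1 + v) * s) ∂mellinMeasure q ∂mellinMeasure p := by
      refine lintegral_congr fun s hs ↦ ?_
      have := lintegral_comp_mul_left q (inv_pos.2 hs) fun v ↦ f ((1 + v) * s)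
      rw [inv_rpow hs.le, rpow_neg hs.le, inv_inv] at this
      rw [← this]
      congr with t
      congr 1
      field_simp
    _ = ∫⁻ v, ∫⁻ s, f ((1 + v) * s) ∂mellinMeasure (p + q) ∂mellinMeasure q := by
      rw [lintegral_rpow_mul]
      exact lintegral_lintegral_swap (Measurable.aemeasurable (by fun_prop))
    _ = _ := by
      rw [← lintegral_mul_const _ (by fun_prop)]
      exact lintegral_congr fun v hv ↦ lintegral_comp_mul_left _ (by positivity) f

lemma lintegral_one_add_rpow {p q : ℝ} (hp : 0 < p) (hq : 0 < q) :
    ∫⁻ v, .ofReal ((1 + v) ^ (-(p + q))) ∂mellinMeasure q = .ofReal (beta p q) := by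
  have gamma_mul_gamma : ENNReal.ofReal (Gamma p) * .ofReal (Gamma q) =
      (∫⁻ v, .ofReal ((1 + v) ^ (-(p + q))) ∂mellinMeasure q) * .ofReal (Gamma (p + q)) := by
    rw [← lintegral_exp_neg hp, ← lintegral_exp_neg hq, ← lintegral_exp_neg (add_pos hp hq),
      ← lintegral_lintegral_comp_add_eq_lintegral_mul p q (by fun_prop),
      ← lintegral_lintegral_mul (by fun_prop) (by fun_prop)]
    simp only [neg_add, exp_add, ENNReal.ofReal_mul (exp_pos _).le]
  have gamma_pos := Gamma_pos_of_pos (add_pos hp hq)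
  rw [beta, ENNReal.ofReal_div_of_pos gamma_pos, ENNReal.ofReal_mul (Gamma_pos_of_pos hp).le]
  exact ENNReal.eq_div_iff (by simpa using gamma_pos) ENNReal.ofReal_ne_top |>.2
    (by rw [gamma_mul_gamma, mul_comm])

lemma lintegral_lintegral_comp_add {p q : ℝ} (hp : 0 < p) (hq : 0 < q) {f : ℝ → ℝ≥0∞}
    (hf : Measurable f) :
    ∫⁻ s, ∫⁻ t, f (s + t) ∂mellinMeasure q ∂mellinMeasure p =
      .ofReal (beta p q) * ∫⁻ w, f w ∂mellinMeasure (p + q) := by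
  rw [lintegral_lintegral_comp_add_eq_lintegral_mul p q hf, lintegral_one_add_rpow hp hq]

lemma lintegral_lintegral_rpow_mul_exp_neg_mul_add_rpow {a b c e r : ℝ} (hac : 0 < a + c)
    (hbe : 0 < b + e) (hr : 0 < a + c + (b + e) + r) :
    ∫⁻ s, ∫⁻ t, .ofReal (s ^ c) * (.ofReal (t ^ e) * .ofReal (exp (-(s + t)) * (s + t) ^ r))
        ∂mellinMeasure b ∂mellinMeasure a =
      .ofReal (beta (a + c) (b + e) * Gamma (a + c + (b + e) + r)) := by
  simp only [lintegral_const_mul' _ _ ENNReal.ofReal_ne_top, lintegral_rpow_mul]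
  rw [lintegral_lintegral_comp_add hac hbe (f := fun w ↦ .ofReal (exp (-w) * w ^ r))
    (by fun_prop), ENNReal.ofReal_mul (ProbabilityTheory.beta_pos hac hbe).le,
    ← lintegral_exp_neg hr, ← lintegral_rpow_mul _ r]
  simp only [ENNReal.ofReal_mul (exp_pos _).le, mul_comm (ENNReal.ofReal (exp _))]

end mellinMeasure

lemma Gamma_mul_Gamma_mul_lintegral_rpow_neg {X : Type*} [MeasurableSpace X] {μ : Measure X}
    [SFinite μ] {a b : ℝ} (ha : 0 < a) (hb : 0 < b) {u v : X → ℝ} (hu : Measurable u)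
    (hv : Measurable v) (u_pos : ∀ x, 0 < u x) (v_pos : ∀ x, 0 < v x) {g : X → ℝ≥0∞}
    (hg : Measurable g) :
    .ofReal (Gamma a * Gamma b) * ∫⁻ x, .ofReal (u x ^ (-a) * v x ^ (-b)) * g x ∂μ =
      ∫⁻ s, ∫⁻ t, ∫⁻ x, .ofReal (exp (-(u x * s + v x * t))) * g x ∂μ
        ∂mellinMeasure b ∂mellinMeasure a := by
  have schwinger (x : X) : .ofReal (Gamma a * Gamma b) * .ofReal (u x ^ (-a) * v x ^ (-b)) =
      ∫⁻ s, ∫⁻ t, .ofReal (exp (-(u x * s + v x * t))) ∂mellinMeasure b ∂mellinMeasure a := by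
    have := u_pos x
    have := v_pos x
    simp only [neg_add, exp_add, ENNReal.ofReal_mul (exp_pos _).le]
    rw [lintegral_lintegral_mul (by fun_prop) (by fun_prop),
      mellinMeasure.lintegral_exp_neg_mul ha (u_pos x),
      mellinMeasure.lintegral_exp_neg_mul hb (v_pos x),
      ← ENNReal.ofReal_mul (by positivity), ← ENNReal.ofReal_mul (by positivity)]
    congr 1
    ring
  calc
    _ = ∫⁻ x, ∫⁻ s, ∫⁻ t, .ofReal (exp (-(u x * s + v x * t))) * g x
          ∂mellinMeasure b ∂mellinMeasure a ∂μ := by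
      rw [← lintegral_const_mul' _ _ ENNReal.ofReal_ne_top]
      refine lintegral_congr fun x ↦ ?_
      rw [← mul_assoc, schwinger, ← lintegral_mul_const _ (by fun_prop)]
      exact lintegral_congr fun s ↦ (lintegral_mul_const _ (by fun_prop)).symm
    _ = ∫⁻ s, ∫⁻ x, ∫⁻ t, .ofReal (exp (-(u x * s + v x * t))) * g x
          ∂mellinMeasure b ∂μ ∂mellinMeasure a :=
      lintegral_lintegral_swap (Measurable.aemeasurable (by fun_prop))
    _ = _ := lintegral_congr fun s ↦
      lintegral_lintegral_swap (Measurable.aemeasurable (by fun_prop))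

section InnerProductSpace

variable {V : Type*} [NormedAddCommGroup V] [InnerProductSpace ℝ V]

lemma mul_norm_add_sq_add_mul_norm_sq {s t : ℝ} (hst : s + t ≠ 0) (z y : V) :
    s * ‖z + y‖ ^ 2 + t * ‖y‖ ^ 2 =
      (s + t) * ‖y + (s / (s + t)) • z‖ ^ 2 + s * t / (s + t) * ‖z‖ ^ 2 := by
  rw [norm_add_sq_real, norm_add_sq_real, norm_smul, inner_smul_right, real_inner_comm y z,
    mul_pow, norm_eq_abs, sq_abs]
  field_simp
  ring

variable [FiniteDimensional ℝ V] [MeasurableSpace V] [BorelSpace V]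

lemma lintegral_exp_neg_mul_norm_sq {c : ℝ} (hc : 0 < c) :
    ∫⁻ x : V, .ofReal (exp (-(c * ‖x‖ ^ 2))) = .ofReal ((π / c) ^ (finrank ℝ V / 2 : ℝ)) := by
  refine lintegral_ofReal_eq_of_integral_eq (.of_forall fun x ↦ by positivity) (by positivity) ?_
  simpa only [neg_mul] using GaussianFourier.integral_rexp_neg_mul_sq_norm (V := V) hc

lemma lintegral_prod_exp_neg_mul_comp_sub {s t : ℝ} (hst : 0 < s + t) {g : V → ℝ≥0∞}
    (hg : Measurable g) :
    ∫⁻ p : V × V, .ofReal (exp (-(s * ‖p.1‖ ^ 2 + t * ‖p.2‖ ^ 2))) * g (p.1 - p.2) =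
      .ofReal ((π / (s + t)) ^ (finrank ℝ V / 2 : ℝ)) *
        ∫⁻ z, .ofReal (exp (-(s * t / (s + t) * ‖z‖ ^ 2))) * g z :=
  calc
    _ = ∫⁻ y : V, ∫⁻ x : V, .ofReal (exp (-(s * ‖x‖ ^ 2 + t * ‖y‖ ^ 2))) * g (x - y) :=
      lintegral_prod_symm' _ (by fun_prop)
    _ = ∫⁻ y : V, ∫⁻ z : V, .ofReal (exp (-(s * ‖z + y‖ ^ 2 + t * ‖y‖ ^ 2))) * g z := by
      refine lintegral_congr fun y ↦ ?_
      rw [← lintegral_add_right_eq_self _ y]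
      simp only [add_sub_cancel_right]
    _ = ∫⁻ z : V, ∫⁻ y : V, .ofReal (exp (-(s * ‖z + y‖ ^ 2 + t * ‖y‖ ^ 2))) * g z :=
      lintegral_lintegral_swap (Measurable.aemeasurable (by fun_prop))
    _ = ∫⁻ z : V, (∫⁻ y : V, .ofReal (exp (-((s + t) * ‖y + (s / (s + t)) • z‖ ^ 2)))) *
          (.ofReal (exp (-(s * t / (s + t) * ‖z‖ ^ 2))) * g z) := by
      refine lintegral_congr fun z ↦ ?_
      rw [← lintegral_mul_const _ (by fun_prop)]
      refine lintegral_congr fun y ↦ ?_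
      rw [mul_norm_add_sq_add_mul_norm_sq hst.ne', neg_add, exp_add,
        ENNReal.ofReal_mul (by positivity), mul_assoc]
    _ = _ := by
      simp only [lintegral_add_right_eq_self
          fun y : V ↦ ENNReal.ofReal (exp (-((s + t) * ‖y‖ ^ 2))),
        lintegral_exp_neg_mul_norm_sq hst]
      exact lintegral_const_mul' _ _ ENNReal.ofReal_ne_top

variable [Nontrivial V]

lemma finrank_mul_volume_real_ball :
    finrank ℝ V * volume.real (Metric.ball (0 : V) 1) =
      2 * π ^ (finrank ℝ V / 2 : ℝ) / Gamma (finrank ℝ V / 2) := by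
  have dim_pos : 0 < (finrank ℝ V : ℝ) := mod_cast Module.finrank_pos
  have sqrt_pow : √π ^ finrank ℝ V = π ^ (finrank ℝ V / 2 : ℝ) := by
    rw [sqrt_eq_rpow, ← rpow_mul_natCast pi_pos.le, one_div_mul_eq_div]
  rw [measureReal_def, InnerProductSpace.volume_ball, sqrt_pow, Gamma_add_one (by positivity),
    ENNReal.ofReal_one, one_pow, one_mul, ENNReal.toReal_ofReal (by positivity)]
  field_simp

lemma integral_norm_rpow_mul_exp_neg_mul_norm_sq {r c : ℝ} (hr : -finrank ℝ V < r)
    (hc : 0 < c) :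
    ∫ z : V, ‖z‖ ^ r * exp (-(c * ‖z‖ ^ 2)) =
      π ^ (finrank ℝ V / 2 : ℝ) * Gamma ((finrank ℝ V + r) / 2) / Gamma (finrank ℝ V / 2) *
        c ^ (-((finrank ℝ V + r) / 2)) := by
  have radial_integrand : ∀ ρ ∈ Set.Ioi (0 : ℝ),
      ρ ^ (finrank ℝ V - 1) • (ρ ^ r * exp (-(c * ρ ^ 2))) =
        ρ ^ (finrank ℝ V + r - 1) * exp (-c * ρ ^ (2 : ℝ)) := fun ρ (hρ : 0 < ρ) ↦ by
    rw [smul_eq_mul, ← mul_assoc, ← rpow_natCast ρ (finrank ℝ V - 1), ← rpow_add hρ,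
      Nat.cast_pred Module.finrank_pos, rpow_two, neg_mul, add_sub_right_comm]
  rw [integral_fun_norm_addHaar volume fun ρ ↦ ρ ^ r * exp (-(c * ρ ^ 2)),
    setIntegral_congr_fun measurableSet_Ioi radial_integrand,
    integral_rpow_mul_exp_neg_mul_rpow two_pos (by linarith) hc, sub_add_cancel, nsmul_eq_mul,
    smul_eq_mul, ← mul_assoc, finrank_mul_volume_real_ball, neg_div]
  ring

lemma lintegral_exp_neg_mul_norm_sq_mul_norm_rpow {r c : ℝ}
    (hr : -finrank ℝ V < r) (hc : 0 < c) :
    ∫⁻ z : V, .ofReal (exp (-(c * ‖z‖ ^ 2))) * .ofReal (‖z‖ ^ r) =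
      .ofReal (π ^ (finrank ℝ V / 2 : ℝ) * Gamma ((finrank ℝ V + r) / 2) / Gamma (finrank ℝ V / 2) *
        c ^ (-((finrank ℝ V + r) / 2))) := by
  have dim_pos : 0 < (finrank ℝ V : ℝ) := mod_cast Module.finrank_pos
  have gamma_pos : 0 < Gamma ((finrank ℝ V + r) / 2) := Gamma_pos_of_pos (by linarith)
  rw [← lintegral_ofReal_eq_of_integral_eq (.of_forall fun z ↦ by positivity) (by positivity)
    (integral_norm_rpow_mul_exp_neg_mul_norm_sq hr hc)]
  simp only [mul_comm (‖_‖ ^ r), ENNReal.ofReal_mul (exp_pos _).le]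

lemma lintegral_prod_exp_neg_mul_norm_sub_rpow {r s t : ℝ}
    (hr : -finrank ℝ V < r) (hs : 0 < s) (ht : 0 < t) :
    ∫⁻ p : V × V, .ofReal (exp (-(s * ‖p.1‖ ^ 2 + t * ‖p.2‖ ^ 2))) * .ofReal (‖p.1 - p.2‖ ^ r) =
      .ofReal (π ^ (finrank ℝ V : ℝ) * Gamma ((finrank ℝ V + r) / 2) / Gamma (finrank ℝ V / 2) *
        ((s * t) ^ (-((finrank ℝ V + r) / 2)) * (s + t) ^ (r / 2))) := by
  have hst : 0 < s + t := add_pos hs ht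
  rw [lintegral_prod_exp_neg_mul_comp_sub hst (g := fun z ↦ .ofReal (‖z‖ ^ r)) (by fun_prop),
    lintegral_exp_neg_mul_norm_sq_mul_norm_rpow hr (by positivity),
    ← ENNReal.ofReal_mul (by positivity)]
  congr 1
  have split_pi :
      π ^ (finrank ℝ V : ℝ) = π ^ (finrank ℝ V / 2 : ℝ) * π ^ (finrank ℝ V / 2 : ℝ) := by
    rw [← rpow_add pi_pos, add_halves]
  have split_sum : (s + t) ^ (r / 2) =
      (s + t) ^ ((finrank ℝ V + r) / 2) / (s + t) ^ (finrank ℝ V / 2 : ℝ) := by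
    rw [← rpow_sub hst, ← sub_div, add_sub_cancel_left]
  rw [div_rpow pi_pos.le hst.le, div_rpow (by positivity) hst.le, rpow_neg hst.le, split_pi,
    split_sum]
  field_simp

lemma lintegral_exp_neg_mul_one_add_norm_sq_mul_norm_sub_rpow {r s t : ℝ}
    (hr : -finrank ℝ V < r) (hs : 0 < s) (ht : 0 < t) :
    ∫⁻ p : V × V, .ofReal (exp (-((1 + ‖p.1‖ ^ 2) * s + (1 + ‖p.2‖ ^ 2) * t))) *
        .ofReal (‖p.1 - p.2‖ ^ r) =
      .ofReal (π ^ (finrank ℝ V : ℝ) * Gamma ((finrank ℝ V + r) / 2) / Gamma (finrank ℝ V / 2)) *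
        (.ofReal (s ^ (-((finrank ℝ V + r) / 2))) * (.ofReal (t ^ (-((finrank ℝ V + r) / 2))) *
          .ofReal (exp (-(s + t)) * (s + t) ^ (r / 2)))) := by
  have dim_pos : 0 < (finrank ℝ V : ℝ) := mod_cast Module.finrank_pos
  have gamma_pos : 0 < Gamma ((finrank ℝ V + r) / 2) := Gamma_pos_of_pos (by linarith)
  have exponent (p : V × V) : -((1 + ‖p.1‖ ^ 2) * s + (1 + ‖p.2‖ ^ 2) * t) =
      -(s + t) + -(s * ‖p.1‖ ^ 2 + t * ‖p.2‖ ^ 2) := by ring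
  simp only [exponent, exp_add (-(s + t)), ENNReal.ofReal_mul (exp_pos (-(s + t))).le, mul_assoc]
  rw [lintegral_const_mul' _ _ ENNReal.ofReal_ne_top,
    lintegral_prod_exp_neg_mul_norm_sub_rpow hr hs ht, mul_rpow hs.le ht.le,
    ENNReal.ofReal_mul (by positivity), ENNReal.ofReal_mul (by positivity),
    ENNReal.ofReal_mul (by positivity)]
  ring

/-- In perturbative QFT this is the two-loop vacuum integral with one massless line. -/
theorem lintegral_one_add_norm_sq_rpow_mul_norm_sub_rpow {a b r : ℝ} (hr : -finrank ℝ V < r)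
    (ha : (finrank ℝ V + r) / 2 < a) (hb : (finrank ℝ V + r) / 2 < b)
    (hab : finrank ℝ V + r / 2 < a + b) :
    ∫⁻ p : V × V, .ofReal ((1 + ‖p.1‖ ^ 2) ^ (-a) * (1 + ‖p.2‖ ^ 2) ^ (-b) * ‖p.1 - p.2‖ ^ r) =
      .ofReal (π ^ (finrank ℝ V : ℝ) * Gamma ((finrank ℝ V + r) / 2) / Gamma (finrank ℝ V / 2) *
        (beta (a - (finrank ℝ V + r) / 2) (b - (finrank ℝ V + r) / 2) *
          Gamma (a + b - finrank ℝ V - r / 2)) / (Gamma a * Gamma b)) := by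
  have dim_pos : 0 < (finrank ℝ V : ℝ) := mod_cast Module.finrank_pos
  set m : ℝ := (finrank ℝ V + r) / 2 with hm
  have m_pos : 0 < m := by linarith
  have gamma_mul_gamma_pos :=
    mul_pos (Gamma_pos_of_pos (m_pos.trans ha)) (Gamma_pos_of_pos (m_pos.trans hb))
  have exponent : a + -m + (b + -m) + r / 2 = a + b - finrank ℝ V - r / 2 := by rw [hm]; ring
  rw [ENNReal.ofReal_div_of_pos gamma_mul_gamma_pos, ENNReal.eq_div_iff
    (by simpa using gamma_mul_gamma_pos) ENNReal.ofReal_ne_top]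
  calc
    _ = .ofReal (Gamma a * Gamma b) *
        ∫⁻ p : V × V, .ofReal ((1 + ‖p.1‖ ^ 2) ^ (-a) * (1 + ‖p.2‖ ^ 2) ^ (-b)) *
          .ofReal (‖p.1 - p.2‖ ^ r) := by
      congr with p
      exact ENNReal.ofReal_mul (by positivity)
    _ = ∫⁻ s, ∫⁻ t,
          .ofReal (π ^ (finrank ℝ V : ℝ) * Gamma m / Gamma (finrank ℝ V / 2)) *
            (.ofReal (s ^ (-m)) * (.ofReal (t ^ (-m)) *
              .ofReal (exp (-(s + t)) * (s + t) ^ (r / 2))))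
          ∂mellinMeasure b ∂mellinMeasure a := by
      rw [Gamma_mul_Gamma_mul_lintegral_rpow_neg (m_pos.trans ha) (m_pos.trans hb)
        (by fun_prop) (by fun_prop) (fun p ↦ by positivity) (fun p ↦ by positivity)
        (by fun_prop)]
      exact mellinMeasure.lintegral_congr fun s hs ↦ mellinMeasure.lintegral_congr fun t ht ↦
        lintegral_exp_neg_mul_one_add_norm_sq_mul_norm_sub_rpow hr hs ht
    _ = _ := by
      simp only [lintegral_const_mul' (ENNReal.ofReal (_ / _)) _ ENNReal.ofReal_ne_top]
      rw [mellinMeasure.lintegral_lintegral_rpow_mul_exp_neg_mul_add_rpow (by linarith)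
        (by linarith) (by linarith), exponent, ← sub_eq_add_neg, ← sub_eq_add_neg,
        ← ENNReal.ofReal_mul (by positivity)]

theorem lintegral_melon_vacuum {Δ : ℝ} (hΔ : Δ < finrank ℝ V / 2) :
    ∫⁻ p : V × V, .ofReal ((1 + ‖p.1‖ ^ 2) ^ (Δ - finrank ℝ V) *
        (1 + ‖p.2‖ ^ 2) ^ (Δ - finrank ℝ V) * ‖p.1 - p.2‖ ^ (-(2 * Δ))) =
      .ofReal (2 ^ (1 - finrank ℝ V : ℝ) * π ^ (finrank ℝ V + 1 / 2 : ℝ) *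
        Gamma (finrank ℝ V / 2 - Δ) /
          (Gamma ((finrank ℝ V + 1) / 2) * Gamma (finrank ℝ V - Δ))) := by
  have dim_pos : 0 < (finrank ℝ V : ℝ) := mod_cast Module.finrank_pos
  have gamma_pos : 0 < Gamma (finrank ℝ V - Δ) := Gamma_pos_of_pos (by linarith)
  have two_loop := lintegral_one_add_norm_sq_rpow_mul_norm_sub_rpow (V := V)
    (a := finrank ℝ V - Δ) (b := finrank ℝ V - Δ) (r := -(2 * Δ))
    (by linarith) (by linarith) (by linarith) (by linarith)
  have half_dim : (finrank ℝ V + -(2 * Δ)) / 2 = finrank ℝ V / 2 - Δ := by ring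
  have beta_arg : finrank ℝ V - Δ - (finrank ℝ V / 2 - Δ) = finrank ℝ V / 2 := by ring
  have gamma_arg :
      finrank ℝ V - Δ + (finrank ℝ V - Δ) - finrank ℝ V - -(2 * Δ) / 2 = finrank ℝ V - Δ := by
    ring
  have duplication := Gamma_half_div_Gamma dim_pos
  rw [neg_sub, half_dim, beta_arg, gamma_arg, beta, add_halves] at two_loop
  rw [two_loop]
  congr 1
  calc
    _ = π ^ (finrank ℝ V : ℝ) * Gamma (finrank ℝ V / 2 - Δ) / Gamma (finrank ℝ V - Δ) *
        (Gamma (finrank ℝ V / 2) / Gamma (finrank ℝ V)) := by field_simp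
    _ = _ := by
      rw [duplication, rpow_add pi_pos, ← sqrt_eq_rpow]
      field_simp

theorem melon_vacuum_integral_general {Δ : ℝ} (hΔ : Δ < finrank ℝ V / 2) :
    Integrable (fun p : V × V ↦ (1 + ‖p.1‖ ^ 2) ^ (Δ - finrank ℝ V) *
      (1 + ‖p.2‖ ^ 2) ^ (Δ - finrank ℝ V) * ‖p.1 - p.2‖ ^ (-(2 * Δ))) ∧
    ∫ x : V, ∫ y : V, (1 + ‖x‖ ^ 2) ^ (Δ - finrank ℝ V) * (1 + ‖y‖ ^ 2) ^ (Δ - finrank ℝ V) *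
        ‖x - y‖ ^ (-(2 * Δ)) =
      2 ^ (1 - finrank ℝ V : ℝ) * π ^ (finrank ℝ V + 1 / 2 : ℝ) * Gamma (finrank ℝ V / 2 - Δ) /
        (Gamma ((finrank ℝ V + 1) / 2) * Gamma (finrank ℝ V - Δ)) := by
  have dim_pos : 0 < (finrank ℝ V : ℝ) := mod_cast Module.finrank_pos
  have : 0 < Gamma (finrank ℝ V - Δ) := Gamma_pos_of_pos (by linarith)
  obtain ⟨integrable, integral_eq⟩ := integrable_and_integral_eq_of_lintegral_ofReal
    (Measurable.aestronglyMeasurable (by fun_prop)) (.of_forall fun p ↦ by positivity)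
    (by positivity) (lintegral_melon_vacuum hΔ)
  exact ⟨integrable, (integral_prod _ integrable).symm.trans integral_eq⟩

end InnerProductSpace

theorem melon_vacuum_integral (d : ℕ) (hd : 1 ≤ d) (Δ : ℝ)
    (hΔ0 : 0 < Δ) (hΔd : Δ < (d : ℝ) / 2) :
    MeasureTheory.Integrable
      (fun p : EuclideanSpace ℝ (Fin d) × EuclideanSpace ℝ (Fin d) =>
        (1 + ‖p.1‖ ^ 2) ^ (Δ - (d : ℝ)) * (1 + ‖p.2‖ ^ 2) ^ (Δ - (d : ℝ)) *
          ‖p.1 - p.2‖ ^ (-(2 * Δ))) ∧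
    ∫ x : EuclideanSpace ℝ (Fin d), ∫ y : EuclideanSpace ℝ (Fin d),
        (1 + ‖x‖ ^ 2) ^ (Δ - (d : ℝ)) * (1 + ‖y‖ ^ 2) ^ (Δ - (d : ℝ)) *
          ‖x - y‖ ^ (-(2 * Δ))
      = (2 : ℝ) ^ (1 - (d : ℝ)) * π ^ ((d : ℝ) + 1 / 2) * Real.Gamma ((d : ℝ) / 2 - Δ) /
          (Real.Gamma (((d : ℝ) + 1) / 2) * Real.Gamma ((d : ℝ) - Δ)) := by
  have : NeZero d := ⟨by omega⟩
  simpa using melon_vacuum_integral_general (V := EuclideanSpace ℝ (Fin d)) (Δ := Δ) (by simpa)
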